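/- Suppose that g₁(t,w₁,w₂,z₁,z₂) > M₁·w₁ whenever w₁ > 0 and g₂(t,w₁,w₂,z₁,z₂) > M₂·w₂ whenever w₂ > 0 (for all t ∈ [0,1], w₁,w₂ ≥ 0, z₁,z₂ ≥ 0). If u,v : [0,1] → [0,∞) are continuous functions, continuously differentiable on (0,1), satisfying u(t) = ∫₀¹ k₁(t,s)·g₁(s,u(s),v(s),|u'(s)|,|v'(s)|) ds and v(t) = ∫₀¹ k₂(t,s)·g₂(s,u(s),v(s),|u'(s)|,|v'(s)|) ds for all t ∈ [0,1], and satisfying the cone conditions min_{t∈[a₁,b₁]} u(t) ≥ c₁·sup_{t∈[0,1]} u(t) and min_{t∈[a₂,b₂]} v(t) ≥ c₂·sup_{t∈[0,1]} v(t), then u ≡ 0 and v ≡ 0. -/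

import Mathlib

/-- Green's function for the Dirichlet problem on `[0,1]`. -/
noncomputable def k1 (t s : ℝ) : ℝ := if s ≤ t then s * (1 - t) else t * (1 - s)

/-- Green's function for the Robin problem on `[0,1]` (`k₂(t,s) = min{s,t}`). -/
noncomputable def k2 (t s : ℝ) : ℝ := if s ≤ t then s else t

/-
A solution `u ≠ 0` in the cone has a positive minimum on `[a,b]`, attained at some `t`. There the
forcing term exceeds `M * u ≥ M * u t`, so discarding the part of the integral outside `[a,b]` gives
`u t > (M * ∫ₐᵇ k(t,s) ds) * u t ≥ u t`, as soon as `1 / M` is at most the minimum over `[a,b]` of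
`t ↦ ∫ₐᵇ k(t,s) ds`. For the Dirichlet kernel this function is concave, so its minimum is attained
at `a` or at `b`, which gives the two cases in the definition of `M₁`.
-/

open MeasureTheory Set

lemma exists_isMinOn_pos_of_mul_sSup_le_sInf {X : Type*} [TopologicalSpace X] {D S : Set X}
    {u : X → ℝ} {c : ℝ} {p : X} (hD : IsCompact D) (hS : IsCompact S) (hSne : S.Nonempty)
    (hSD : S ⊆ D) (hu : ContinuousOn u D) (hc : 0 < c)
    (hcone : c * sSup (u '' D) ≤ sInf (u '' S)) (hp : p ∈ D) (hup : 0 < u p) :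
    ∃ t ∈ S, 0 < u t ∧ IsMinOn u S t := by
  obtain ⟨t, ht, hinf, hmin⟩ := hS.exists_sInf_image_eq_and_le hSne (hu.mono hSD)
  have hsup : u p ≤ sSup (u '' D) := le_csSup (hD.bddAbove_image hu) (mem_image_of_mem u hp)
  exact ⟨t, ht, hinf ▸ (mul_pos hc (hup.trans_le hsup)).trans_le hcone, hmin⟩

section Hammerstein

variable {X : Type*} [MeasurableSpace X] {μ : Measure X} {D S : Set X}

lemma const_mul_setIntegral_lt_setIntegral_mul {k f : X → ℝ} {L : ℝ} (hD : MeasurableSet D)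
    (hS : MeasurableSet S) (hSD : S ⊆ D) (hμS : μ S ≠ 0) (hk : IntegrableOn k S μ)
    (hkf : IntegrableOn (fun s => k s * f s) D μ) (hkf0 : ∀ s ∈ D, 0 ≤ k s * f s)
    (hkpos : ∀ s ∈ S, 0 < k s) (hLf : ∀ s ∈ S, L < f s) :
    L * ∫ s in S, k s ∂μ < ∫ s in D, k s * f s ∂μ := by
  have hkfS : IntegrableOn (fun s => k s * f s) S μ := hkf.mono_set hSD
  have hgap_pos : ∀ s ∈ S, 0 < k s * f s - L * k s := fun s hs => by
    rw [mul_comm L, ← mul_sub]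
    exact mul_pos (hkpos s hs) (sub_pos.2 (hLf s hs))
  have hgap : 0 < ∫ s in S, (k s * f s - L * k s) ∂μ := by
    rw [setIntegral_pos_iff_support_of_nonneg_ae
      (ae_restrict_of_forall_mem hS fun s hs => (hgap_pos s hs).le) (hkfS.sub (hk.const_mul L)),
      inter_eq_right.2 fun s hs => Function.mem_support.2 (hgap_pos s hs).ne']
    exact pos_iff_ne_zero.2 hμS
  rw [integral_sub hkfS (hk.const_mul L), integral_const_mul, sub_pos] at hgap
  exact hgap.trans_le <|
    setIntegral_mono_set hkf (ae_restrict_of_forall_mem hD hkf0) hSD.eventuallyLE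

theorem eqOn_zero_of_eq_setIntegral_mul [TopologicalSpace X] [T2Space X] [OpensMeasurableSpace X]
    {K : X → X → ℝ} {f u : X → ℝ} {c M : ℝ} (hD : IsCompact D) (hS : IsCompact S) (hSD : S ⊆ D)
    (hμS : μ S ≠ 0) (hK0 : ∀ t ∈ D, ∀ s ∈ D, 0 ≤ K t s) (hKpos : ∀ t ∈ S, ∀ s ∈ S, 0 < K t s)
    (hKM : ∀ t ∈ S, 1 ≤ M * ∫ s in S, K t s ∂μ) (hf0 : ∀ s ∈ D, 0 ≤ f s)
    (hf : ∀ s ∈ S, 0 < u s → M * u s < f s) (hu : ContinuousOn u D)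
    (hueq : ∀ t ∈ D, u t = ∫ s in D, K t s * f s ∂μ) (hc : 0 < c)
    (hcone : c * sSup (u '' D) ≤ sInf (u '' S)) :
    EqOn u 0 D := by
  have hKf0 : ∀ t ∈ D, ∀ s ∈ D, 0 ≤ K t s * f s :=
    fun t ht s hs => mul_nonneg (hK0 t ht s hs) (hf0 s hs)
  have hu0 : ∀ t ∈ D, 0 ≤ u t := fun t ht =>
    hueq t ht ▸ setIntegral_nonneg hD.measurableSet (hKf0 t ht)
  intro p hp
  by_contra hup
  obtain ⟨t, ht, hut, hmin⟩ := exists_isMinOn_pos_of_mul_sSup_le_sInf hD hS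
    (nonempty_of_measure_ne_zero hμS) hSD hu hc hcone hp ((hu0 p hp).lt_of_ne' hup)
  have hM : 0 < M := pos_of_mul_pos_left (one_pos.trans_le (hKM t ht)) <|
    setIntegral_nonneg hS.measurableSet fun s hs => (hKpos t ht s hs).le
  have hforcing : ∀ s ∈ S, M * u t < f s := fun s hs =>
    (mul_le_mul_of_nonneg_left (hmin hs) hM.le).trans_lt (hf s hs (hut.trans_le (hmin hs)))
  -- Integrability comes for free: both integrals are nonzero, and that of a non-integrable function
  -- is `0` by convention.
  have hK : IntegrableOn (K t) S μ :=
    .of_integral_ne_zero fun h0 => by linarith [h0 ▸ hKM t ht]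
  have hKf : IntegrableOn (fun s => K t s * f s) D μ :=
    .of_integral_ne_zero (hueq t (hSD ht) ▸ hut.ne')
  have hlt : u t < u t := calc
    u t ≤ u t * (M * ∫ s in S, K t s ∂μ) := le_mul_of_one_le_right hut.le (hKM t ht)
    _ = M * u t * ∫ s in S, K t s ∂μ := by ring
    _ < ∫ s in D, K t s * f s ∂μ := const_mul_setIntegral_lt_setIntegral_mul hD.measurableSet
        hS.measurableSet hSD hμS hK hKf (hKf0 t (hSD ht)) (hKpos t ht) hforcing
    _ = u t := (hueq t (hSD ht)).symm
  exact hlt.false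

theorem eqOn_zero_of_eq_intervalIntegral_mul {K : ℝ → ℝ → ℝ} {f u : ℝ → ℝ} {a b c d e M : ℝ}
    (hda : d ≤ a) (hab : a < b) (hbe : b ≤ e) (hK0 : ∀ t ∈ Icc d e, ∀ s ∈ Icc d e, 0 ≤ K t s)
    (hKpos : ∀ t ∈ Icc a b, ∀ s ∈ Icc a b, 0 < K t s)
    (hKM : ∀ t ∈ Icc a b, 1 ≤ M * ∫ s in a..b, K t s) (hf0 : ∀ s ∈ Icc d e, 0 ≤ f s)
    (hf : ∀ s ∈ Icc a b, 0 < u s → M * u s < f s) (hu : ContinuousOn u (Icc d e))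
    (hueq : ∀ t ∈ Icc d e, u t = ∫ s in d..e, K t s * f s) (hc : 0 < c)
    (hcone : c * sSup (u '' Icc d e) ≤ sInf (u '' Icc a b)) :
    EqOn u 0 (Icc d e) := by
  simp only [intervalIntegral.integral_of_le hab.le, ← integral_Icc_eq_integral_Ioc] at hKM
  simp only [intervalIntegral.integral_of_le (hda.trans (hab.le.trans hbe)),
    ← integral_Icc_eq_integral_Ioc] at hueq
  have hvol : volume (Icc a b) ≠ 0 := by simpa using hab
  exact eqOn_zero_of_eq_setIntegral_mul isCompact_Icc isCompact_Icc (Icc_subset_Icc hda hbe) hvol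
    hK0 hKpos hKM hf0 hf hu hueq hc hcone

end Hammerstein

lemma concaveOn_integral {E X : Type*} [AddCommMonoid E] [Module ℝ E] [MeasurableSpace X]
    {μ : Measure X} {C : Set E} {F : E → X → ℝ} (hC : Convex ℝ C)
    (hF : ∀ᵐ s ∂μ, ConcaveOn ℝ C fun t => F t s) (hint : ∀ t ∈ C, Integrable (F t) μ) :
    ConcaveOn ℝ C fun t => ∫ s, F t s ∂μ := by
  refine ⟨hC, fun x hx y hy α β hα hβ hαβ => ?_⟩
  have hx' := (hint x hx).const_mul α
  have hy' := (hint y hy).const_mul β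
  simp only [smul_eq_mul]
  rw [← integral_const_mul, ← integral_const_mul, ← integral_add hx' hy']
  exact integral_mono_ae (hx'.add hy') (hint _ (hC hx hy hα hβ hαβ)) <|
    hF.mono fun s hs => hs.2 hx hy hα hβ hαβ

section Dirichlet

variable {a b s t : ℝ}

lemma k1_eq_min (t s : ℝ) : k1 t s = min (s * (1 - t)) (t * (1 - s)) := by
  unfold k1
  split_ifs with h
  · exact (min_eq_left (by linarith)).symm
  · exact (min_eq_right (by linarith)).symm

lemma k1_nonneg (ht : t ∈ Icc (0 : ℝ) 1) (hs : s ∈ Icc (0 : ℝ) 1) : 0 ≤ k1 t s := by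
  rw [k1_eq_min]
  exact le_min (mul_nonneg hs.1 (sub_nonneg.2 ht.2)) (mul_nonneg ht.1 (sub_nonneg.2 hs.2))

lemma k1_pos (ht : t ∈ Ioo (0 : ℝ) 1) (hs : s ∈ Ioo (0 : ℝ) 1) : 0 < k1 t s := by
  rw [k1_eq_min]
  exact lt_min (mul_pos hs.1 (sub_pos.2 ht.2)) (mul_pos ht.1 (sub_pos.2 hs.2))

lemma continuous_k1 (t : ℝ) : Continuous (k1 t) := by
  simp only [funext (k1_eq_min t)]
  fun_prop

lemma concaveOn_k1_left (s : ℝ) : ConcaveOn ℝ univ fun t => k1 t s := by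
  simp only [k1_eq_min]
  exact ConcaveOn.inf
    ⟨convex_univ, fun x _ y _ α β _ _ hαβ => by
      simp only [smul_eq_mul]; linear_combination s * hαβ⟩
    ⟨convex_univ, fun x _ y _ α β _ _ _ => by
      simp only [smul_eq_mul]; linarith⟩

lemma concaveOn_integral_k1 (hab : a ≤ b) :
    ConcaveOn ℝ univ fun t => ∫ s in a..b, k1 t s := by
  simp only [intervalIntegral.integral_of_le hab]
  exact concaveOn_integral convex_univ (ae_of_all _ concaveOn_k1_left)
    fun t _ => (continuous_k1 t).integrableOn_Ioc

lemma integral_k1_left_endpoint (hab : a ≤ b) :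
    ∫ s in a..b, k1 a s = a * (b - a) * (2 - a - b) / 2 := by
  have hk : EqOn (k1 a) (fun s => a * (1 - s)) (uIcc a b) := fun s hs => by
    rw [uIcc_of_le hab] at hs
    rw [k1_eq_min]
    exact min_eq_right (by linarith [hs.1])
  rw [intervalIntegral.integral_congr hk, intervalIntegral.integral_const_mul,
    intervalIntegral.integral_sub intervalIntegrable_const intervalIntegral.intervalIntegrable_id,
    intervalIntegral.integral_const, smul_eq_mul, integral_id]
  ring

lemma integral_k1_right_endpoint (hab : a ≤ b) :
    ∫ s in a..b, k1 b s = (1 - b) * (b ^ 2 - a ^ 2) / 2 := by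
  have hk : EqOn (k1 b) (fun s => s * (1 - b)) (uIcc a b) := fun s hs => by
    rw [uIcc_of_le hab] at hs
    rw [k1_eq_min]
    exact min_eq_left (by linarith [hs.2])
  rw [intervalIntegral.integral_congr hk, intervalIntegral.integral_mul_const, integral_id]
  ring

lemma ite_div_eq_inv_min (a b : ℝ) :
    (if a + b ≤ 1 then 2 / (a * (b - a) * (2 - a - b)) else 2 / ((1 - b) * (b ^ 2 - a ^ 2))) =
      (min (a * (b - a) * (2 - a - b) / 2) ((1 - b) * (b ^ 2 - a ^ 2) / 2))⁻¹ := by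
  have hdiff : (1 - b) * (b ^ 2 - a ^ 2) - a * (b - a) * (2 - a - b)
      = (b - a) ^ 2 * (1 - (a + b)) := by ring
  split_ifs with h
  · have hsign := mul_nonneg (sq_nonneg (b - a)) (sub_nonneg.2 h)
    rw [min_eq_left (by linarith [hdiff, hsign]), inv_div]
  · have hsign := mul_nonneg (sq_nonneg (b - a)) (sub_nonneg.2 (not_le.1 h).le)
    rw [min_eq_right (by linarith [hdiff, hsign]), inv_div]

lemma one_le_ite_mul_integral_k1 (ha : 0 < a) (hab : a < b) (hb : b < 1) (ht : t ∈ Icc a b) :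
    1 ≤ (if a + b ≤ 1 then 2 / (a * (b - a) * (2 - a - b))
      else 2 / ((1 - b) * (b ^ 2 - a ^ 2))) * ∫ s in a..b, k1 t s := by
  have hmin := (concaveOn_integral_k1 hab.le).min_le_of_mem_Icc (mem_univ a) (mem_univ b) ht
  rw [integral_k1_left_endpoint hab.le, integral_k1_right_endpoint hab.le] at hmin
  have hleft : 0 < a * (b - a) * (2 - a - b) :=
    mul_pos (mul_pos ha (sub_pos.2 hab)) (by linarith)
  have hright : 0 < (1 - b) * (b ^ 2 - a ^ 2) :=
    mul_pos (sub_pos.2 hb) (sub_pos.2 (pow_lt_pow_left₀ hab ha.le two_ne_zero))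
  rw [ite_div_eq_inv_min]
  exact (one_le_inv_mul₀ (lt_min (half_pos hleft) (half_pos hright))).2 hmin

end Dirichlet

section Robin

variable {a b s t : ℝ}

lemma k2_eq_min (t s : ℝ) : k2 t s = min s t :=
  (min_def s t).symm

lemma k2_nonneg (ht : 0 ≤ t) (hs : 0 ≤ s) : 0 ≤ k2 t s :=
  k2_eq_min t s ▸ le_min hs ht

lemma k2_pos (ht : 0 < t) (hs : 0 < s) : 0 < k2 t s :=
  k2_eq_min t s ▸ lt_min hs ht

lemma mul_sub_le_integral_k2 (hab : a ≤ b) (hat : a ≤ t) : a * (b - a) ≤ ∫ s in a..b, k2 t s := by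
  have hk : Continuous (k2 t) := by
    simp only [funext (k2_eq_min t)]
    fun_prop
  calc a * (b - a) = ∫ _ in a..b, a := by
        rw [intervalIntegral.integral_const, smul_eq_mul, mul_comm]
    _ ≤ ∫ s in a..b, k2 t s :=
      intervalIntegral.integral_mono_on hab intervalIntegrable_const (hk.intervalIntegrable a b)
        fun s hs => k2_eq_min t s ▸ le_min hs.1 hat

lemma one_le_one_div_mul_integral_k2 (ha : 0 < a) (hab : a < b) (hat : a ≤ t) :
    1 ≤ 1 / (a * (b - a)) * ∫ s in a..b, k2 t s := by
  rw [one_div, one_le_inv_mul₀ (mul_pos ha (sub_pos.2 hab))]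
  exact mul_sub_le_integral_k2 hab.le hat

end Robin

-- `p` and `q` stand for the gradient terms `|u'|` and `|v'|`.
theorem stmt3_general {a₁ b₁ a₂ b₂ c₁ c₂ M₁ M₂ : ℝ}
    (ha₁ : 0 < a₁) (hab₁ : a₁ < b₁) (hb₁ : b₁ < 1)
    (ha₂ : 0 < a₂) (hab₂ : a₂ < b₂) (hb₂ : b₂ ≤ 1) (hc₁ : 0 < c₁) (hc₂ : 0 < c₂)
    (hM₁ : M₁ = if a₁ + b₁ ≤ 1 then 2 / (a₁ * (b₁ - a₁) * (2 - a₁ - b₁))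
      else 2 / ((1 - b₁) * (b₁ ^ 2 - a₁ ^ 2)))
    (hM₂ : M₂ = 1 / (a₂ * (b₂ - a₂)))
    {g₁ g₂ : ℝ → ℝ → ℝ → ℝ → ℝ → ℝ}
    (hg₁0 : ∀ t ∈ Icc (0 : ℝ) 1, ∀ w₁ ∈ Ici (0 : ℝ), ∀ w₂ ∈ Ici (0 : ℝ), ∀ z₁ ∈ Ici (0 : ℝ),
      ∀ z₂ ∈ Ici (0 : ℝ), 0 ≤ g₁ t w₁ w₂ z₁ z₂)
    (hg₂0 : ∀ t ∈ Icc (0 : ℝ) 1, ∀ w₁ ∈ Ici (0 : ℝ), ∀ w₂ ∈ Ici (0 : ℝ), ∀ z₁ ∈ Ici (0 : ℝ),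
      ∀ z₂ ∈ Ici (0 : ℝ), 0 ≤ g₂ t w₁ w₂ z₁ z₂)
    (hg₁ : ∀ t ∈ Icc a₁ b₁, ∀ w₁ ∈ Ici (0 : ℝ), ∀ w₂ ∈ Ici (0 : ℝ), ∀ z₁ ∈ Ici (0 : ℝ),
      ∀ z₂ ∈ Ici (0 : ℝ), 0 < w₁ → M₁ * w₁ < g₁ t w₁ w₂ z₁ z₂)
    (hg₂ : ∀ t ∈ Icc a₂ b₂, ∀ w₁ ∈ Ici (0 : ℝ), ∀ w₂ ∈ Ici (0 : ℝ), ∀ z₁ ∈ Ici (0 : ℝ),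
      ∀ z₂ ∈ Ici (0 : ℝ), 0 < w₂ → M₂ * w₂ < g₂ t w₁ w₂ z₁ z₂)
    {u v p q : ℝ → ℝ}
    (hu0 : ∀ t ∈ Icc (0 : ℝ) 1, 0 ≤ u t) (hv0 : ∀ t ∈ Icc (0 : ℝ) 1, 0 ≤ v t)
    (hp0 : ∀ t ∈ Icc (0 : ℝ) 1, 0 ≤ p t) (hq0 : ∀ t ∈ Icc (0 : ℝ) 1, 0 ≤ q t)
    (hu : ContinuousOn u (Icc 0 1)) (hv : ContinuousOn v (Icc 0 1))
    (hueq : ∀ t ∈ Icc (0 : ℝ) 1,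
      u t = ∫ s in (0 : ℝ)..1, k1 t s * g₁ s (u s) (v s) (p s) (q s))
    (hveq : ∀ t ∈ Icc (0 : ℝ) 1,
      v t = ∫ s in (0 : ℝ)..1, k2 t s * g₂ s (u s) (v s) (p s) (q s))
    (hucone : c₁ * sSup (u '' Icc (0 : ℝ) 1) ≤ sInf (u '' Icc a₁ b₁))
    (hvcone : c₂ * sSup (v '' Icc (0 : ℝ) 1) ≤ sInf (v '' Icc a₂ b₂)) :
    (∀ t ∈ Icc (0 : ℝ) 1, u t = 0) ∧ (∀ t ∈ Icc (0 : ℝ) 1, v t = 0) := by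
  have hsub₁ : Icc a₁ b₁ ⊆ Ioo 0 1 := Icc_subset_Ioo ha₁ hb₁
  have hsub₂ : Icc a₂ b₂ ⊆ Icc 0 1 := Icc_subset_Icc ha₂.le hb₂
  constructor
  · refine eqOn_zero_of_eq_intervalIntegral_mul ha₁.le hab₁ hb₁.le
      (fun t ht s hs => k1_nonneg ht hs)
      (fun t ht s hs => k1_pos (hsub₁ ht) (hsub₁ hs))
      (fun t ht => hM₁ ▸ one_le_ite_mul_integral_k1 ha₁ hab₁ hb₁ ht)
      (fun s hs => hg₁0 s hs _ (hu0 s hs) _ (hv0 s hs) _ (hp0 s hs) _ (hq0 s hs))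
      (fun s hs => ?_) hu hueq hc₁ hucone
    have hs' := Ioo_subset_Icc_self (hsub₁ hs)
    exact hg₁ s hs _ (hu0 s hs') _ (hv0 s hs') _ (hp0 s hs') _ (hq0 s hs')
  · refine eqOn_zero_of_eq_intervalIntegral_mul ha₂.le hab₂ hb₂
      (fun t ht s hs => k2_nonneg ht.1 hs.1)
      (fun t ht s hs => k2_pos (ha₂.trans_le ht.1) (ha₂.trans_le hs.1))
      (fun t ht => hM₂ ▸ one_le_one_div_mul_integral_k2 ha₂ hab₂ ht.1)
      (fun s hs => hg₂0 s hs _ (hu0 s hs) _ (hv0 s hs) _ (hp0 s hs) _ (hq0 s hs))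
      (fun s hs => ?_) hv hveq hc₂ hvcone
    have hs' := hsub₂ hs
    exact hg₂ s hs _ (hu0 s hs') _ (hv0 s hs') _ (hp0 s hs') _ (hq0 s hs')

/-- Non-existence: if `g₁ > M₁·w₁` whenever `w₁ > 0` and `g₂ > M₂·w₂` whenever
`w₂ > 0`, then the only nonnegative solution of the system of Hammerstein
integral equations `u = ∫ k₁·g₁`, `v = ∫ k₂·g₂` lying in the cone (i.e.
satisfying the Harnack-type inequalities `min_{[aᵢ,bᵢ]} ≥ cᵢ·sup_{[0,1]}`) is
the zero one.  Here `c₁ = min{a₁, 1−b₁}`, `c₂ = a₂`,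
`M₁ = 2/(a₁(b₁−a₁)(2−a₁−b₁))` if `a₁+b₁ ≤ 1`, `M₁ = 2/((1−b₁)(b₁²−a₁²))` if
`a₁+b₁ > 1`, and `M₂ = 1/(a₂(b₂−a₂))`. -/
theorem stmt3 (a₁ b₁ a₂ b₂ : ℝ)
    (ha₁ : 0 < a₁) (hab₁ : a₁ < b₁) (hb₁ : b₁ < 1)
    (ha₂ : 0 < a₂) (hab₂ : a₂ < b₂) (hb₂ : b₂ ≤ 1)
    (c₁ c₂ M₁ M₂ : ℝ)
    (hc₁ : c₁ = min a₁ (1 - b₁)) (hc₂ : c₂ = a₂)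
    (hM₁ : M₁ = if a₁ + b₁ ≤ 1 then 2 / (a₁ * (b₁ - a₁) * (2 - a₁ - b₁))
      else 2 / ((1 - b₁) * (b₁ ^ 2 - a₁ ^ 2)))
    (hM₂ : M₂ = 1 / (a₂ * (b₂ - a₂)))
    (g₁ g₂ : ℝ → ℝ → ℝ → ℝ → ℝ → ℝ)
    (hg₁cont : ContinuousOn
      (fun q : ℝ × ℝ × ℝ × ℝ × ℝ => g₁ q.1 q.2.1 q.2.2.1 q.2.2.2.1 q.2.2.2.2)
      (Set.Icc (0:ℝ) 1 ×ˢ Set.Ici (0:ℝ) ×ˢ Set.Ici (0:ℝ) ×ˢ Set.Ici (0:ℝ) ×ˢ Set.Ici (0:ℝ)))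
    (hg₂cont : ContinuousOn
      (fun q : ℝ × ℝ × ℝ × ℝ × ℝ => g₂ q.1 q.2.1 q.2.2.1 q.2.2.2.1 q.2.2.2.2)
      (Set.Icc (0:ℝ) 1 ×ˢ Set.Ici (0:ℝ) ×ˢ Set.Ici (0:ℝ) ×ˢ Set.Ici (0:ℝ) ×ˢ Set.Ici (0:ℝ)))
    (hg₁nn : ∀ t ∈ Set.Icc (0:ℝ) 1, ∀ w₁ ∈ Set.Ici (0:ℝ), ∀ w₂ ∈ Set.Ici (0:ℝ),
      ∀ z₁ ∈ Set.Ici (0:ℝ), ∀ z₂ ∈ Set.Ici (0:ℝ), 0 ≤ g₁ t w₁ w₂ z₁ z₂)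
    (hg₂nn : ∀ t ∈ Set.Icc (0:ℝ) 1, ∀ w₁ ∈ Set.Ici (0:ℝ), ∀ w₂ ∈ Set.Ici (0:ℝ),
      ∀ z₁ ∈ Set.Ici (0:ℝ), ∀ z₂ ∈ Set.Ici (0:ℝ), 0 ≤ g₂ t w₁ w₂ z₁ z₂)
    (hg₁ : ∀ t ∈ Set.Icc (0:ℝ) 1, ∀ w₁ ∈ Set.Ici (0:ℝ), ∀ w₂ ∈ Set.Ici (0:ℝ),
      ∀ z₁ ∈ Set.Ici (0:ℝ), ∀ z₂ ∈ Set.Ici (0:ℝ),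
      0 < w₁ → M₁ * w₁ < g₁ t w₁ w₂ z₁ z₂)
    (hg₂ : ∀ t ∈ Set.Icc (0:ℝ) 1, ∀ w₁ ∈ Set.Ici (0:ℝ), ∀ w₂ ∈ Set.Ici (0:ℝ),
      ∀ z₁ ∈ Set.Ici (0:ℝ), ∀ z₂ ∈ Set.Ici (0:ℝ),
      0 < w₂ → M₂ * w₂ < g₂ t w₁ w₂ z₁ z₂)
    (u v : ℝ → ℝ)
    (hu0 : ∀ t ∈ Set.Icc (0:ℝ) 1, 0 ≤ u t) (hv0 : ∀ t ∈ Set.Icc (0:ℝ) 1, 0 ≤ v t)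
    (hucont : ContinuousOn u (Set.Icc 0 1)) (hvcont : ContinuousOn v (Set.Icc 0 1))
    (huC1 : ContDiffOn ℝ 1 u (Set.Ioo 0 1)) (hvC1 : ContDiffOn ℝ 1 v (Set.Ioo 0 1))
    (hueq : ∀ t ∈ Set.Icc (0:ℝ) 1,
      u t = ∫ s in (0:ℝ)..1, k1 t s * g₁ s (u s) (v s) |deriv u s| |deriv v s|)
    (hveq : ∀ t ∈ Set.Icc (0:ℝ) 1,
      v t = ∫ s in (0:ℝ)..1, k2 t s * g₂ s (u s) (v s) |deriv u s| |deriv v s|)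
    (hucone : c₁ * sSup (u '' Set.Icc (0:ℝ) 1) ≤ sInf (u '' Set.Icc a₁ b₁))
    (hvcone : c₂ * sSup (v '' Set.Icc (0:ℝ) 1) ≤ sInf (v '' Set.Icc a₂ b₂)) :
    (∀ t ∈ Set.Icc (0:ℝ) 1, u t = 0) ∧ (∀ t ∈ Set.Icc (0:ℝ) 1, v t = 0) := by
  exact stmt3_general ha₁ hab₁ hb₁ ha₂ hab₂ hb₂ (hc₁ ▸ lt_min ha₁ (sub_pos.2 hb₁)) (hc₂ ▸ ha₂)
    hM₁ hM₂ hg₁nn hg₂nn (fun t ht => hg₁ t (Icc_subset_Icc ha₁.le hb₁.le ht))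
    (fun t ht => hg₂ t (Icc_subset_Icc ha₂.le hb₂ ht)) hu0 hv0 (fun _ _ => abs_nonneg _)
    (fun _ _ => abs_nonneg _) hucont hvcont hueq hveq hucone hvcone
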